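/- Let f be a self-usage utility function, and let p_a, p_b, B_a, t_a satisfy 0 ≤ p_a < p_b < p_a + B_a and t_a ∈ [0,1]. Define the owner's utility U(s_a, s_b) = f(1 − s_a − s_b) + p_a·s_a + p_b·s_b + B_a·max(s_a − t_a, 0) on the feasible set {s_a, s_b ≥ 0, s_a + s_b ≤ 1}. Then for every feasible (s_a, s_b) with s_a > 0 and s_b > 0: if s_a ≥ t_a then U(s_a + s_b, 0) > U(s_a, s_b), and if s_a < t_a then U(0, s_a + s_b) > U(s_a, s_b). Consequently every maximizer of U satisfies s_a·s_b = 0, i.e. when platform a adopts a linear loyalty program and platform b adopts none, no owner shares on both platforms simultaneously. -/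

import Mathlib

/-!
Moving units from one platform to the other leaves self-usage unchanged, so along a line
`sa + sb = s` the owner's utility varies only through his revenue. As a function of `sa`, that
revenue is piecewise linear, with slope `pa - pb < 0` below the threshold and slope
`pa + Ba - pb > 0` above it. Hence the utility strictly increases on moving away from the threshold
along the line, and a split with both `sa` and `sb` positive is beaten by an endpoint.
-/

/-- A self-usage utility function `f` with derivative `f'`:
differentiable on `[0,1]`, strictly increasing on `[0,1]`,
strictly concave on `[0,1]` (with `f'` strictly decreasing), and `f' 1 = 0`. -/
def SelfUsage (f f' : ℝ → ℝ) : Prop :=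
  (∀ x ∈ Set.Icc (0:ℝ) 1, HasDerivWithinAt f (f' x) (Set.Icc (0:ℝ) 1) x) ∧
  StrictMonoOn f (Set.Icc (0:ℝ) 1) ∧
  StrictConcaveOn ℝ (Set.Icc (0:ℝ) 1) f ∧
  StrictAntiOn f' (Set.Icc (0:ℝ) 1) ∧
  f' 1 = 0

section OwnerUtility

variable {R : Type*} [CommRing R] [LinearOrder R]

/-- The utility of an owner who shares `sa` on platform `a` and `sb` on platform `b` and uses the
rest of his unit resource himself, where `pa`, `pb` are the unit prices and `Ba`, `ta` the rate and
the threshold of the loyalty bonus of platform `a`. -/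
def ownerUtility (f : R → R) (pa pb Ba ta sa sb : R) : R :=
  f (1 - sa - sb) + pa * sa + pb * sb + Ba * max (sa - ta) 0

variable (R) in
/-- The feasible sharing decisions of an owner of one unit of the resource, as pairs
`(sa, sb)`. -/
def feasibleSharing : Set (R × R) :=
  {s | 0 ≤ s.1 ∧ 0 ≤ s.2 ∧ s.1 + s.2 ≤ 1}

variable {f : R → R} {pa pb Ba ta sa sb : R}

lemma ownerUtility_sub_right (s x : R) :
    ownerUtility f pa pb Ba ta x (s - x) =
      f (1 - s) + pb * s + ((pa - pb) * x + Ba * max (x - ta) 0) := by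
  have self_usage : 1 - x - (s - x) = 1 - s := by ring
  rw [ownerUtility, self_usage]
  ring

variable [IsStrictOrderedRing R]

lemma strictMonoOn_ownerUtility_sub_right (hb : pb < pa + Ba) (s : R) :
    StrictMonoOn (fun x => ownerUtility f pa pb Ba ta x (s - x)) (Set.Ici ta) := by
  intro x hx y hy hxy
  have slope : (pa + Ba - pb) * x < (pa + Ba - pb) * y :=
    mul_lt_mul_of_pos_left hxy (sub_pos.2 hb)
  simp only [ownerUtility_sub_right, max_eq_left (sub_nonneg.2 hx), max_eq_left (sub_nonneg.2 hy)]
  linarith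

lemma strictAntiOn_ownerUtility_sub_right (hab : pa < pb) (s : R) :
    StrictAntiOn (fun x => ownerUtility f pa pb Ba ta x (s - x)) (Set.Iic ta) := by
  intro x hx y hy hxy
  have slope : (pa - pb) * y < (pa - pb) * x := mul_lt_mul_of_neg_left hxy (sub_neg.2 hab)
  simp only [ownerUtility_sub_right, max_eq_right (sub_nonpos.2 hx),
    max_eq_right (sub_nonpos.2 hy)]
  linarith

lemma ownerUtility_lt_ownerUtility_add_zero (hb : pb < pa + Ba) (hsb : 0 < sb) (h : ta ≤ sa) :
    ownerUtility f pa pb Ba ta sa sb < ownerUtility f pa pb Ba ta (sa + sb) 0 := by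
  have hlt : sa < sa + sb := lt_add_of_pos_right sa hsb
  simpa only [add_sub_cancel_left, sub_self] using
    strictMonoOn_ownerUtility_sub_right (f := f) hb (sa + sb) h (h.trans hlt.le) hlt

lemma ownerUtility_lt_ownerUtility_zero_add (hab : pa < pb) (hsa : 0 < sa) (h : sa ≤ ta) :
    ownerUtility f pa pb Ba ta sa sb < ownerUtility f pa pb Ba ta 0 (sa + sb) := by
  simpa only [add_sub_cancel_left, sub_zero] using
    strictAntiOn_ownerUtility_sub_right (f := f) (Ba := Ba) hab (sa + sb) (hsa.le.trans h) h hsa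

lemma mul_eq_zero_of_isMaxOn_ownerUtility (hab : pa < pb) (hb : pb < pa + Ba) {s : R × R}
    (hs : s ∈ feasibleSharing R)
    (hmax : IsMaxOn (fun s => ownerUtility f pa pb Ba ta s.1 s.2) (feasibleSharing R) s) :
    s.1 * s.2 = 0 := by
  obtain ⟨hsa, hsb, hsum⟩ := hs
  by_contra hne
  have hsa_pos : 0 < s.1 := hsa.lt_of_ne' (left_ne_zero_of_mul hne)
  have hsb_pos : 0 < s.2 := hsb.lt_of_ne' (right_ne_zero_of_mul hne)
  have htotal : 0 ≤ s.1 + s.2 := add_nonneg hsa hsb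
  rcases le_total ta s.1 with h | h
  · have all_a : (s.1 + s.2, 0) ∈ feasibleSharing R := ⟨htotal, le_rfl, by simpa using hsum⟩
    exact (ownerUtility_lt_ownerUtility_add_zero hb hsb_pos h).not_ge (hmax all_a)
  · have all_b : (0, s.1 + s.2) ∈ feasibleSharing R := ⟨le_rfl, htotal, by simpa using hsum⟩
    exact (ownerUtility_lt_ownerUtility_zero_add hab hsa_pos h).not_ge (hmax all_b)

theorem LLP_induces_exclusive_sharing_general (f : R → R) (ta : R) (hab : pa < pb)
    (hb : pb < pa + Ba) :
    (∀ sa sb : R, 0 < sa → 0 < sb →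
      (ta ≤ sa →
        ownerUtility f pa pb Ba ta sa sb < ownerUtility f pa pb Ba ta (sa + sb) 0) ∧
      (sa < ta →
        ownerUtility f pa pb Ba ta sa sb < ownerUtility f pa pb Ba ta 0 (sa + sb))) ∧
    ∀ s ∈ feasibleSharing R,
      IsMaxOn (fun s => ownerUtility f pa pb Ba ta s.1 s.2) (feasibleSharing R) s →
      s.1 * s.2 = 0 :=
  ⟨fun _ _ hsa hsb =>
    ⟨ownerUtility_lt_ownerUtility_add_zero hb hsb,
      fun h => ownerUtility_lt_ownerUtility_zero_add hab hsa h.le⟩,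
    fun _ => mul_eq_zero_of_isMaxOn_ownerUtility hab hb⟩

end OwnerUtility

/-- when platform a runs a linear loyalty program and platform b
none, sharing on both platforms simultaneously is never optimal: every
maximizer satisfies s_a·s_b = 0. -/
theorem LLP_induces_exclusive_sharing
    (f f' : ℝ → ℝ) (hf : SelfUsage f f')
    (pa pb Ba ta : ℝ) (hpa : 0 ≤ pa) (hab : pa < pb) (hb : pb < pa + Ba)
    (hta : ta ∈ Set.Icc (0:ℝ) 1) :
    (∀ sa sb : ℝ, 0 ≤ sa → 0 ≤ sb → sa + sb ≤ 1 → 0 < sa → 0 < sb →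
      (ta ≤ sa →
        f (1 - (sa + sb) - 0) + pa * (sa + sb) + pb * 0 + Ba * max ((sa + sb) - ta) 0
          > f (1 - sa - sb) + pa * sa + pb * sb + Ba * max (sa - ta) 0) ∧
      (sa < ta →
        f (1 - 0 - (sa + sb)) + pa * 0 + pb * (sa + sb) + Ba * max ((0:ℝ) - ta) 0
          > f (1 - sa - sb) + pa * sa + pb * sb + Ba * max (sa - ta) 0)) ∧
    (∀ sa sb : ℝ, 0 ≤ sa → 0 ≤ sb → sa + sb ≤ 1 →
      (∀ sa' sb' : ℝ, 0 ≤ sa' → 0 ≤ sb' → sa' + sb' ≤ 1 →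
        f (1 - sa' - sb') + pa * sa' + pb * sb' + Ba * max (sa' - ta) 0
          ≤ f (1 - sa - sb) + pa * sa + pb * sb + Ba * max (sa - ta) 0) →
      sa * sb = 0) := by
  obtain ⟨consolidate, exclusive⟩ := LLP_induces_exclusive_sharing_general f ta hab hb
  exact ⟨fun sa sb _ _ _ => consolidate sa sb, fun sa sb hsa hsb hsum hmax =>
    exclusive (sa, sb) ⟨hsa, hsb, hsum⟩ fun s ⟨hsa', hsb', hsum'⟩ => hmax s.1 s.2 hsa' hsb' hsum'⟩
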